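/- Let p ∈ (1,∞), γ ∈ (0,1], and let λ be a finite positive Borel measure on the closed unit disc whose restriction to 𝔻 has the form dλ(ζ) = (1−|ζ|) dμ(ζ) for a positive Borel measure μ on 𝔻, and suppose there is M > 0 such that (∫₀^{2π} λ(C(φ,δ))^p dφ)^{1/p} ≤ M·δ^γ for all δ ∈ (0,1). For r ∈ (0,1) and φ ∈ ℝ define u₁(re^{iφ}) = ∫_{D*(re^{iφ},1/7)} log|(1−re^{iφ}·conj(ζ))/(re^{iφ}−ζ)| dμ(ζ). Then there is a constant C = C(p,γ) > 0, independent of λ and r, such that (∫₀^{2π} |u₁(re^{iφ})|^p dφ)^{1/p} ≤ C·M·(1−r)^{γ−1} for all r ∈ (1/2, 1). -/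

import Mathlib

open MeasureTheory Complex

/-- The Carleson box `C(φ,δ) = {ζ ∈ closure 𝔻 : |ζ| ≥ 1-δ, |arg ζ - φ| ≤ πδ}`
(the angular condition is expressed via a representative `θ` of the argument,
so that it is `2π`-periodic in `φ`). -/
noncomputable def carlesonBox (φ δ : ℝ) : Set ℂ :=
  {ζ : ℂ | ‖ζ‖ ≤ 1 ∧ 1 - δ ≤ ‖ζ‖ ∧
    ∃ θ : ℝ, |θ - φ| ≤ Real.pi * δ ∧
      ζ = (‖ζ‖ : ℂ) * Complex.exp (θ * Complex.I)}

/-- The pseudohyperbolic disc `D*(z,σ) = {ζ : |(z-ζ)/(1-z·conj ζ)| < σ}`. -/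
noncomputable def pseudoDisc (z : ℂ) (σ : ℝ) : Set ℂ :=
  {ζ : ℂ | ‖(z - ζ) / (1 - z * (starRingEnd ℂ) ζ)‖ < σ}


lemma aux_geom {z ζ : ℂ} {r : ℝ} (hr : 1 / 2 < r) (hr1 : r < 1) (hz : ‖z‖ = r)
    (hζ : ‖ζ‖ < 1) (h : ζ ∈ pseudoDisc z (1 / 7)) :
    ‖z - ζ‖ ≤ (1 - r) / 3 ∧ ‖1 - z * (starRingEnd ℂ) ζ‖ ≤ 7 / 3 * (1 - r) ∧
    ‖z - ζ‖ ≤ ‖1 - z * (starRingEnd ℂ) ζ‖ / 7 := by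
  have hne : 1 - z * (starRingEnd ℂ) ζ ≠ 0 := by
    intro h0
    have : z * (starRingEnd ℂ) ζ = 1 := (sub_eq_zero.mp h0).symm
    have h2 : ‖z‖ * ‖ζ‖ = 1 := by
      rw [← RCLike.norm_conj ζ, ← norm_mul, this, norm_one]
    have := norm_nonneg ζ
    nlinarith
  have hpos : 0 < ‖1 - z * (starRingEnd ℂ) ζ‖ := norm_pos_iff.mpr hne
  have h1 : ‖z - ζ‖ < 1 / 7 * ‖1 - z * (starRingEnd ℂ) ζ‖ := by
    have h' : ‖(z - ζ) / (1 - z * (starRingEnd ℂ) ζ)‖ < 1 / 7 := h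
    rw [norm_div, div_lt_iff₀ hpos] at h'
    exact h'
  have h2 : ‖1 - z * (starRingEnd ℂ) ζ‖ ≤ (1 - r ^ 2) + r * ‖z - ζ‖ := by
    have e : 1 - z * (starRingEnd ℂ) ζ
        = ((1 - r ^ 2 : ℝ) : ℂ) + z * (starRingEnd ℂ) (z - ζ) := by
      have : z * (starRingEnd ℂ) z = ((r ^ 2 : ℝ) : ℂ) := by
        rw [Complex.mul_conj, Complex.normSq_eq_norm_sq, hz]
      rw [map_sub, mul_sub, this]; push_cast; ring
    rw [e]
    refine (norm_add_le _ _).trans ?_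
    rw [norm_mul, RCLike.norm_conj, hz, Complex.norm_real, Real.norm_of_nonneg (by nlinarith)]
  have h3 : 0 ≤ ‖z - ζ‖ := norm_nonneg _
  have h4 : ‖z - ζ‖ ≤ (1 - r) / 3 := by nlinarith
  refine ⟨h4, ?_, by linarith⟩
  nlinarith

lemma aux_out {z ζ : ℂ} (hz : ‖z‖ < 1) (hζ : 1 ≤ ‖ζ‖) (h : ζ ∈ pseudoDisc z (1 / 7)) :
    Real.log (‖(1 - z * (starRingEnd ℂ) ζ) / (z - ζ)‖) = 0 := by
  by_cases hne : 1 - z * (starRingEnd ℂ) ζ = 0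
  · simp [hne]
  exfalso
  have hpos : 0 < ‖1 - z * (starRingEnd ℂ) ζ‖ := norm_pos_iff.mpr hne
  have h1 : ‖z - ζ‖ < 1 / 7 * ‖1 - z * (starRingEnd ℂ) ζ‖ := by
    have h' : ‖(z - ζ) / (1 - z * (starRingEnd ℂ) ζ)‖ < 1 / 7 := h
    rw [norm_div, div_lt_iff₀ hpos] at h'
    exact h'
  have e : ‖1 - z * (starRingEnd ℂ) ζ‖ ^ 2 - ‖z - ζ‖ ^ 2 = (1 - ‖z‖ ^ 2) * (1 - ‖ζ‖ ^ 2) := by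
    simp only [← Complex.normSq_eq_norm_sq, Complex.normSq_apply]
    simp
    ring
  have h3 : 0 ≤ ‖z - ζ‖ := norm_nonneg _
  have h5 : 0 ≤ ‖z‖ := norm_nonneg _
  have h6 : (1 - ‖z‖ ^ 2) * (1 - ‖ζ‖ ^ 2) ≤ 0 :=
    mul_nonpos_of_nonneg_of_nonpos (by nlinarith) (by nlinarith)
  nlinarith

lemma aux_box {ζ : ℂ} {r φ ψ : ℝ} (hr : 1 / 2 < r) (hr1 : r < 1)
    (hζ : ‖ζ‖ < 1) (h : ‖(r : ℂ) * Complex.exp (φ * Complex.I) - ζ‖ ≤ (1 - r) / 3)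
    (hψ : |φ - ψ| ≤ Real.pi * (1 - r) / 2) :
    ζ ∈ carlesonBox ψ (4 / 3 * (1 - r)) := by
  have hnz : ‖(r : ℂ) * Complex.exp (φ * Complex.I)‖ = r := by
    rw [norm_mul, Complex.norm_exp_ofReal_mul_I, Complex.norm_real, mul_one,
      Real.norm_of_nonneg (by linarith)]
  have hrad : r - (1 - r) / 3 ≤ ‖ζ‖ := by
    have := norm_sub_norm_le ((r : ℂ) * Complex.exp (φ * Complex.I)) ζ
    rw [hnz] at this; linarith
  refine ⟨hζ.le, by linarith, ?_⟩
  set w : ℂ := ζ * Complex.exp (-(φ * Complex.I)) with hw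
  have hwn : ‖w‖ = ‖ζ‖ := by
    rw [hw, norm_mul, ← neg_mul, ← Complex.ofReal_neg, Complex.norm_exp_ofReal_mul_I, mul_one]
  have hwr : ‖(r : ℂ) - w‖ ≤ (1 - r) / 3 := by
    have : (r : ℂ) - w = ((r : ℂ) * Complex.exp (φ * Complex.I) - ζ)
        * Complex.exp (-(φ * Complex.I)) := by
      rw [sub_mul, mul_assoc, ← Complex.exp_add]; simp [hw]
    rw [this, norm_mul, ← neg_mul, ← Complex.ofReal_neg, Complex.norm_exp_ofReal_mul_I, mul_one]
    exact h
  have hre : 0 ≤ w.re := by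
    have := (Complex.abs_re_le_norm ((r : ℂ) - w)).trans hwr
    simp only [Complex.sub_re, Complex.ofReal_re] at this
    have := (abs_le.mp this).2
    linarith
  have him : |w.im| ≤ (1 - r) / 3 := by
    have := (Complex.abs_im_le_norm ((r : ℂ) - w)).trans hwr
    simpa using this
  have harg : |Complex.arg w| ≤ Real.pi / 2 := Complex.abs_arg_le_pi_div_two_iff.mpr hre
  have hs := Real.mul_abs_le_abs_sin harg
  have hζpos : 1 / 3 ≤ ‖ζ‖ := by linarith
  have hs2 : |Real.sin (Complex.arg w)| ≤ 1 - r := by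
    rw [Complex.sin_arg, abs_div, abs_norm, hwn, div_le_iff₀ (by linarith)]
    nlinarith
  have hpi := Real.pi_pos
  have ht : |Complex.arg w| ≤ Real.pi * (1 - r) / 2 := by
    have h1 : 2 / Real.pi * |Complex.arg w| ≤ 1 - r := hs.trans hs2
    rw [div_mul_eq_mul_div, div_le_iff₀ hpi] at h1
    linarith
  refine ⟨Complex.arg w + φ, ?_, ?_⟩
  · have : Complex.arg w + φ - ψ = Complex.arg w + (φ - ψ) := by ring
    rw [this]
    refine (abs_add_le _ _).trans ?_
    nlinarith
  · have h1 := Complex.norm_mul_exp_arg_mul_I w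
    rw [hwn] at h1
    push_cast
    rw [add_mul, Complex.exp_add, ← mul_assoc, h1, hw, mul_assoc, ← Complex.exp_add]
    simp

lemma aux_log {p : ℝ} (hp : 1 < p) {z ζ : ℂ} {r : ℝ} (hr : 1 / 2 < r) (hr1 : r < 1) (hz : ‖z‖ = r)
    (hζ : ‖ζ‖ < 1) (h : ζ ∈ pseudoDisc z (1 / 7)) :
    ‖Real.log (‖(1 - z * (starRingEnd ℂ) ζ) / (z - ζ)‖)‖ₑ ^ p ≤
      ENNReal.ofReal ((2 * p) ^ p * (7 / 3 * (1 - r)) ^ (1 / 2 : ℝ)) *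
        (ENNReal.ofReal ‖z - ζ‖) ^ (-(1 / 2) : ℝ) := by
  obtain ⟨h1, h2, h3⟩ := aux_geom hr hr1 hz hζ h
  have hc : 0 < (2 * p) ^ p * (7 / 3 * (1 - r)) ^ (1 / 2 : ℝ) := by
    have : 0 < 1 - r := by linarith
    positivity
  rcases eq_or_lt_of_le (norm_nonneg (z - ζ)) with h0 | h0
  · rw [← h0, ENNReal.ofReal_zero, ENNReal.zero_rpow_of_neg (by norm_num),
      ENNReal.mul_top (by simpa using hc)]
    exact le_top
  · set Q := ‖(1 - z * (starRingEnd ℂ) ζ) / (z - ζ)‖ with hQ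
    have hQ' : Q = ‖1 - z * (starRingEnd ℂ) ζ‖ / ‖z - ζ‖ := norm_div _ _
    have hQ1 : 1 ≤ Q := by
      rw [hQ', le_div_iff₀ h0]; linarith
    have hQ2 : Q ≤ (7 / 3 * (1 - r)) / ‖z - ζ‖ := by
      rw [hQ']; gcongr
    have hl := Real.log_nonneg hQ1
    rw [Real.enorm_of_nonneg hl, ENNReal.ofReal_rpow_of_nonneg hl (by linarith),
      ENNReal.ofReal_rpow_of_pos h0, ← ENNReal.ofReal_mul hc.le]
    apply ENNReal.ofReal_le_ofReal
    have hs : 0 < 1 / (2 * p) := by positivity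
    have hl2 := Real.log_le_rpow_div (zero_le_one.trans hQ1) hs
    calc Real.log Q ^ p ≤ (Q ^ (1 / (2 * p)) / (1 / (2 * p))) ^ p := by gcongr
      _ = (2 * p) ^ p * Q ^ (1 / 2 : ℝ) := by
        rw [div_div_eq_mul_div, div_one, Real.mul_rpow (by positivity) (by positivity),
          ← Real.rpow_mul (by linarith), mul_comm]
        congr 2
        field_simp
      _ ≤ (2 * p) ^ p * ((7 / 3 * (1 - r)) / ‖z - ζ‖) ^ (1 / 2 : ℝ) := by gcongr
      _ = _ := by
        rw [Real.div_rpow (by linarith) h0.le, Real.rpow_neg h0.le]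
        ring

lemma aux_sq {ℓ : ℝ} (hℓ : 0 ≤ ℓ) :
    ∫⁻ x in Set.Ioc 0 ℓ, ENNReal.ofReal (x ^ (-(1 / 2) : ℝ)) =
      ENNReal.ofReal (2 * ℓ ^ (1 / 2 : ℝ)) := by
  have hi : IntervalIntegrable (fun x : ℝ => x ^ (-(1 / 2) : ℝ)) volume 0 ℓ :=
    intervalIntegral.intervalIntegrable_rpow' (by norm_num)
  have h1 : ∫ x in (0 : ℝ)..ℓ, x ^ (-(1 / 2) : ℝ) = 2 * ℓ ^ (1 / 2 : ℝ) := by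
    rw [integral_rpow (Or.inl (by norm_num))]
    norm_num
    ring
  rw [← h1, intervalIntegral.integral_of_le hℓ, ofReal_integral_eq_lintegral_ofReal]
  · exact (intervalIntegrable_iff_integrableOn_Ioc_of_le hℓ).mp hi
  · filter_upwards [ae_restrict_mem measurableSet_Ioc] with x hx
    exact Real.rpow_nonneg hx.1.le _

lemma aux_sq2 {a b c : ℝ} (hc : c ∈ Set.Icc a b) :
    ∫⁻ x in Set.Ioc a b, ENNReal.ofReal (|x - c| ^ (-(1 / 2) : ℝ)) ≤
      ENNReal.ofReal (4 * (b - a) ^ (1 / 2 : ℝ)) := by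
  have hm : Measurable fun x : ℝ => ENNReal.ofReal (|x| ^ (-(1 / 2) : ℝ)) := by fun_prop
  have hpos : ∀ ℓ : ℝ, 0 ≤ ℓ → ∫⁻ x in Set.Ioc 0 ℓ, ENNReal.ofReal (|x| ^ (-(1 / 2) : ℝ)) =
      ENNReal.ofReal (2 * ℓ ^ (1 / 2 : ℝ)) := by
    intro ℓ hℓ
    rw [← aux_sq hℓ]
    refine setLIntegral_congr_fun measurableSet_Ioc ?_
    intro x hx
    simp only [abs_of_pos hx.1]
  have h1 : ∫⁻ x in Set.Ioc c b, ENNReal.ofReal (|x - c| ^ (-(1 / 2) : ℝ)) =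
      ENNReal.ofReal (2 * (b - c) ^ (1 / 2 : ℝ)) := by
    rw [← hpos _ (sub_nonneg.mpr hc.2)]
    have := (measurePreserving_sub_right (volume : Measure ℝ) c).setLIntegral_comp_preimage
      (s := Set.Ioc 0 (b - c)) measurableSet_Ioc hm
    rw [← this]
    congr 2
    simp
  have h2 : ∫⁻ x in Set.Ioc a c, ENNReal.ofReal (|x - c| ^ (-(1 / 2) : ℝ)) =
      ENNReal.ofReal (2 * (c - a) ^ (1 / 2 : ℝ)) := by
    rw [← hpos _ (sub_nonneg.mpr hc.1)]
    have := (Measure.measurePreserving_sub_left (volume : Measure ℝ) c).setLIntegral_comp_preimage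
      (s := Set.Ico 0 (c - a)) measurableSet_Ico hm
    rw [restrict_Ico_eq_restrict_Ioc] at this
    rw [← this]
    simp only [abs_sub_comm _ c]
    congr 2
    simp
  rw [← Set.Ioc_union_Ioc_eq_Ioc hc.1 hc.2]
  refine (lintegral_union_le _ _ _).trans ?_
  rw [h1, h2, ← ENNReal.ofReal_add (by have := hc.1; have : 0 ≤ c - a := by linarith
                                       positivity)
    (by have := hc.2; have : 0 ≤ b - c := by linarith
        positivity)]
  apply ENNReal.ofReal_le_ofReal
  have e1 : (c - a) ^ (1 / 2 : ℝ) ≤ (b - a) ^ (1 / 2 : ℝ) :=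
    Real.rpow_le_rpow (by linarith [hc.1]) (by linarith [hc.2]) (by norm_num)
  have e2 : (b - c) ^ (1 / 2 : ℝ) ≤ (b - a) ^ (1 / 2 : ℝ) :=
    Real.rpow_le_rpow (by linarith [hc.2]) (by linarith [hc.1]) (by norm_num)
  linarith

lemma aux_chord {r φ φ' : ℝ} (hr : 1 / 2 < r) (h : |φ - φ'| ≤ Real.pi) :
    |φ - φ'| / Real.pi ≤
      ‖(r : ℂ) * Complex.exp (φ * Complex.I) - (r : ℂ) * Complex.exp (φ' * Complex.I)‖ := by
  have e : (r : ℂ) * Complex.exp (φ * Complex.I) - (r : ℂ) * Complex.exp (φ' * Complex.I)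
      = r * Complex.exp (φ' * Complex.I) * (Complex.exp (Complex.I * ((φ - φ' : ℝ) : ℂ)) - 1) := by
    rw [mul_sub, mul_assoc, ← Complex.exp_add, mul_one]
    congr 3
    push_cast; ring
  rw [e, norm_mul, norm_mul, Complex.norm_exp_ofReal_mul_I, Complex.norm_real, mul_one,
      Real.norm_of_nonneg (by linarith), Complex.norm_exp_I_mul_ofReal_sub_one, norm_mul,
      Real.norm_eq_abs (Real.sin _)]
  have hs := Real.mul_abs_le_abs_sin (x := (φ - φ') / 2) (by
    rw [abs_div, abs_two]; linarith)
  rw [abs_div, abs_two] at hs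
  have e2 : 2 / Real.pi * (|φ - φ'| / 2) = |φ - φ'| / Real.pi := by ring
  rw [e2] at hs
  have : 0 ≤ |Real.sin ((φ - φ') / 2)| := abs_nonneg _
  norm_num
  nlinarith

lemma aux_int {r a b : ℝ} (hr : 1 / 2 < r) (hab : a ≤ b) (hba : b - a ≤ Real.pi) (ζ : ℂ) :
    ∫⁻ φ in Set.Ioc a b,
      (ENNReal.ofReal ‖(r : ℂ) * Complex.exp ((φ : ℝ) * Complex.I) - ζ‖) ^ (-(1 / 2) : ℝ) ≤
      ENNReal.ofReal ((2 * Real.pi) ^ (1 / 2 : ℝ) * (4 * (b - a) ^ (1 / 2 : ℝ))) := by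
  have hcont : Continuous fun φ : ℝ => ‖(r : ℂ) * Complex.exp ((φ : ℝ) * Complex.I) - ζ‖ := by
    fun_prop
  obtain ⟨c, hc, hmin⟩ := (isCompact_Icc (a := a) (b := b)).exists_isMinOn
    ⟨a, Set.left_mem_Icc.mpr hab⟩ hcont.continuousOn
  have hpi := Real.pi_pos
  have hlow : ∀ φ ∈ Set.Ioc a b, |φ - c| / (2 * Real.pi) ≤
      ‖(r : ℂ) * Complex.exp ((φ : ℝ) * Complex.I) - ζ‖ := by
    intro φ hφ
    have h1 : ‖(r : ℂ) * Complex.exp ((c : ℝ) * Complex.I) - ζ‖ ≤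
        ‖(r : ℂ) * Complex.exp ((φ : ℝ) * Complex.I) - ζ‖ := hmin ⟨hφ.1.le, hφ.2⟩
    have h2 := aux_chord (φ := φ) (φ' := c) hr (by
      rw [abs_le]; constructor <;> linarith [hφ.1, hφ.2, hc.1, hc.2])
    have h3 := norm_sub_le_norm_sub_add_norm_sub ((r : ℂ) * Complex.exp ((φ : ℝ) * Complex.I)) ζ
      ((r : ℂ) * Complex.exp ((c : ℝ) * Complex.I))
    rw [norm_sub_rev ζ] at h3
    have e : |φ - c| / (2 * Real.pi) = |φ - c| / Real.pi / 2 := by ring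
    rw [e]; linarith
  have hne : ∀ᵐ φ : ℝ, φ ≠ c := by
    simp [ae_iff]
  calc _ ≤ ∫⁻ φ in Set.Ioc a b, ENNReal.ofReal ((2 * Real.pi) ^ (1 / 2 : ℝ)) *
        ENNReal.ofReal (|φ - c| ^ (-(1 / 2) : ℝ)) := by
        apply lintegral_mono_ae
        filter_upwards [ae_restrict_mem measurableSet_Ioc, ae_restrict_of_ae hne] with φ hφ hφc
        have h0 : 0 < |φ - c| := abs_pos.mpr (sub_ne_zero.mpr hφc)
        have h1 := hlow φ hφ
        have h2 : 0 < |φ - c| / (2 * Real.pi) := by positivity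
        rw [ENNReal.ofReal_rpow_of_pos (h2.trans_le h1), ← ENNReal.ofReal_mul (by positivity)]
        apply ENNReal.ofReal_le_ofReal
        refine (Real.rpow_le_rpow_of_nonpos h2 h1 (by norm_num)).trans_eq ?_
        rw [Real.div_rpow h0.le (by positivity), Real.rpow_neg (by positivity : 0 ≤ 2 * Real.pi)]
        field_simp
    _ = ENNReal.ofReal ((2 * Real.pi) ^ (1 / 2 : ℝ)) *
        ∫⁻ φ in Set.Ioc a b, ENNReal.ofReal (|φ - c| ^ (-(1 / 2) : ℝ)) :=
        lintegral_const_mul _ (by fun_prop)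
    _ ≤ ENNReal.ofReal ((2 * Real.pi) ^ (1 / 2 : ℝ)) *
        ENNReal.ofReal (4 * (b - a) ^ (1 / 2 : ℝ)) := by
        gcongr; exact aux_sq2 hc
    _ = _ := by rw [← ENNReal.ofReal_mul (by positivity)]

lemma box_meas {δ : ℝ} (hδ : δ < 1) (hδ0 : 0 < δ) :
    MeasurableSet {x : ℝ × ℂ | x.2 ∈ carlesonBox x.1 δ} := by
  have e : {x : ℝ × ℂ | x.2 ∈ carlesonBox x.1 δ} =
      {x : ℝ × ℂ | ‖x.2‖ ≤ 1} ∩ ({x : ℝ × ℂ | 1 - δ ≤ ‖x.2‖} ∩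
        {x : ℝ × ℂ | |Complex.arg (x.2 * Complex.exp (-(x.1 * Complex.I)))| ≤ Real.pi * δ}) := by
    ext ⟨φ, ζ⟩
    simp only [carlesonBox, Set.mem_ofPred_eq, Set.mem_inter_iff]
    refine and_congr_right fun _ => and_congr_right fun h2 => ?_
    have hpos : 0 < ‖ζ‖ := by linarith
    have hpi := Real.pi_pos
    constructor
    · rintro ⟨θ, hθ, hζ⟩
      have : ζ * Complex.exp (-(φ * Complex.I)) =
          (‖ζ‖ : ℂ) * Complex.exp ((θ - φ : ℝ) * Complex.I) := by
        conv_lhs => rw [hζ]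
        rw [mul_assoc, ← Complex.exp_add]
        congr 2
        push_cast; ring
      rw [this, Complex.arg_real_mul _ hpos, Complex.arg_exp_mul_I, (toIocMod_eq_self _).mpr]
      · exact hθ
      · have h3 : |θ - φ| < Real.pi := by nlinarith
        rw [abs_lt] at h3
        constructor <;> linarith
    · intro h
      refine ⟨Complex.arg (ζ * Complex.exp (-(φ * Complex.I))) + φ, by simpa using h, ?_⟩
      have h1 := Complex.norm_mul_exp_arg_mul_I (ζ * Complex.exp (-(φ * Complex.I)))
      have hn : ‖ζ * Complex.exp (-(φ * Complex.I))‖ = ‖ζ‖ := by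
        rw [norm_mul, ← neg_mul, ← Complex.ofReal_neg, Complex.norm_exp_ofReal_mul_I, mul_one]
      rw [hn] at h1
      push_cast
      rw [add_mul, Complex.exp_add, ← mul_assoc, h1, mul_assoc, ← Complex.exp_add]
      simp
  rw [e]
  refine (measurableSet_le (by fun_prop) (by fun_prop)).inter
    ((measurableSet_le (by fun_prop) (by fun_prop)).inter
    (measurableSet_le ?_ (by fun_prop)))
  have : Measurable fun x : ℝ × ℂ => Complex.arg (x.2 * Complex.exp (-(x.1 * Complex.I))) :=
    Complex.measurable_arg.comp (by fun_prop)
  exact this.abs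

lemma box_meas1 {δ : ℝ} (hδ : δ < 1) (hδ0 : 0 < δ) (ψ : ℝ) : MeasurableSet (carlesonBox ψ δ) :=
  measurable_prodMk_left (x := ψ) (box_meas hδ hδ0)

lemma box_meas2 {δ : ℝ} (hδ : δ < 1) (hδ0 : 0 < δ) (lam : Measure ℂ) [IsFiniteMeasure lam] :
    Measurable fun ψ => lam (carlesonBox ψ δ) :=
  measurable_measure_prodMk_left (box_meas hδ hδ0)

lemma aux_holder {p : ℝ} (hp : 1 < p) (ν : Measure ℂ) {f : ℂ → ENNReal} (hf : Measurable f) :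
    (∫⁻ ζ, f ζ ∂ν) ^ p ≤ (ν Set.univ) ^ (p - 1) * ∫⁻ ζ, f ζ ^ p ∂ν := by
  have hc := Real.HolderConjugate.conjExponent hp
  have h := ENNReal.lintegral_mul_le_Lp_mul_Lq ν hc (f := f) (g := fun _ => 1)
    hf.aemeasurable aemeasurable_const
  simp only [Pi.mul_apply, mul_one, ENNReal.one_rpow, lintegral_one] at h
  have hp0 : 0 < p := by linarith
  refine (ENNReal.rpow_le_rpow h hp0.le).trans_eq ?_
  rw [ENNReal.mul_rpow_of_nonneg _ _ hp0.le, ← ENNReal.rpow_mul, ← ENNReal.rpow_mul,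
    one_div_mul_cancel hp0.ne', ENNReal.rpow_one, mul_comm]
  congr 2
  rw [Real.conjExponent]
  have : p - 1 ≠ 0 := by linarith
  field_simp

/-- the integrand -/
noncomputable def ker (r φ : ℝ) (ζ : ℂ) : ℝ :=
  Real.log (‖(1 - (r : ℂ) * Complex.exp (φ * Complex.I) * (starRingEnd ℂ) ζ) /
                  ((r : ℂ) * Complex.exp (φ * Complex.I) - ζ)‖)

lemma ker_meas (r φ : ℝ) : Measurable (ker r φ) := by
  unfold ker
  have : Continuous (starRingEnd ℂ) := Complex.continuous_conj
  fun_prop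

lemma pd_meas (z : ℂ) : MeasurableSet (pseudoDisc z (1 / 7)) := by
  have : Continuous (starRingEnd ℂ) := Complex.continuous_conj
  exact measurableSet_lt (by fun_prop) (by fun_prop)

lemma norm_z {r : ℝ} (hr : 0 ≤ r) (φ : ℝ) : ‖(r : ℂ) * Complex.exp (φ * Complex.I)‖ = r := by
    rw [norm_mul, Complex.norm_exp_ofReal_mul_I, Complex.norm_real, mul_one,
      Real.norm_of_nonneg hr]

lemma aux_u {p : ℝ} (hp : 1 < p) {r : ℝ} (hr : 1 / 2 < r) (hr1 : r < 1) (μ lam : Measure ℂ)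
    (hl : ∀ M : Set ℂ, MeasurableSet M → M ⊆ Metric.ball (0 : ℂ) 1 →
        lam M = ∫⁻ ζ in M, ENNReal.ofReal (1 - ‖ζ‖) ∂μ) {φ ψ : ℝ}
    (hψ : |φ - ψ| ≤ Real.pi * (1 - r) / 2) :
    ‖∫ ζ in pseudoDisc ((r : ℂ) * Complex.exp (φ * Complex.I)) (1 / 7), ker r φ ζ ∂μ‖ₑ ^ p ≤
      ENNReal.ofReal ((3 / 2 / (1 - r)) ^ p * ((2 * p) ^ p * (7 / 3 * (1 - r)) ^ (1 / 2 : ℝ))) *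
      (lam (carlesonBox ψ (4 / 3 * (1 - r))) ^ (p - 1) *
        ∫⁻ ζ in carlesonBox ψ (4 / 3 * (1 - r)),
        (ENNReal.ofReal ‖(r : ℂ) * Complex.exp ((φ : ℝ) * Complex.I) - ζ‖) ^ (-(1 / 2) : ℝ)
          ∂lam) := by
  set z := (r : ℂ) * Complex.exp (φ * Complex.I) with hzdef
  have hz : ‖z‖ = r := norm_z (by linarith) φ
  have hp0 : 0 < p := by linarith
  have hd : 0 < 1 - r := by linarith
  set B := Metric.ball (0 : ℂ) 1
  set D := pseudoDisc z (1 / 7)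
  have hDm : MeasurableSet D := pd_meas z
  have hBm : MeasurableSet B := measurableSet_ball
  have hE : MeasurableSet (D ∩ B) := hDm.inter hBm
  have hkm := ker_meas r φ
  have s1 : ‖∫ ζ in D, ker r φ ζ ∂μ‖ₑ ≤ ∫⁻ ζ in D ∩ B, ‖ker r φ ζ‖ₑ ∂μ := by
    refine (enorm_integral_le_lintegral_enorm _).trans ?_
    rw [← lintegral_inter_add_sdiff _ D hBm]
    have : ∫⁻ ζ in D \ B, ‖ker r φ ζ‖ₑ ∂μ = 0 := by
      rw [setLIntegral_congr_fun (hDm.diff hBm) (g := fun _ => 0)]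
      · simp
      · intro ζ hζ
        have h1 : 1 ≤ ‖ζ‖ := by simpa [B] using hζ.2
        have : ker r φ ζ = 0 := aux_out (by rw [hz]; exact hr1) h1 hζ.1
        simp [this]
    rw [this, add_zero]
  have hrestr : lam.restrict (D ∩ B) =
      (μ.withDensity fun ζ => ENNReal.ofReal (1 - ‖ζ‖)).restrict (D ∩ B) := by
    ext s hs
    rw [Measure.restrict_apply hs, Measure.restrict_apply hs, withDensity_apply _ (hs.inter hE)]
    exact hl _ (hs.inter hE) (fun x hx => hx.2.2)
  have s2 : ∫⁻ ζ in D ∩ B, ‖ker r φ ζ‖ₑ ∂μ ≤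
      ENNReal.ofReal (3 / 2 / (1 - r)) * ∫⁻ ζ in D ∩ B, ‖ker r φ ζ‖ₑ ∂lam := by
    rw [hrestr, setLIntegral_withDensity_eq_setLIntegral_mul _ (by fun_prop) hkm.enorm hE,
      ← lintegral_const_mul _ (by
        have := hkm.enorm
        have h2 : Measurable fun ζ : ℂ => ENNReal.ofReal (1 - ‖ζ‖) := by fun_prop
        exact h2.mul this)]
    refine setLIntegral_mono' hE fun ζ hζ => ?_
    have hζ1 : ‖ζ‖ < 1 := by simpa [B] using hζ.2
    obtain ⟨h1, -, -⟩ := aux_geom hr hr1 hz hζ1 hζ.1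
    have h3 := norm_sub_norm_le ζ z
    rw [norm_sub_rev, hz] at h3
    have : 1 ≤ ENNReal.ofReal (3 / 2 / (1 - r)) * ENNReal.ofReal (1 - ‖ζ‖) := by
      rw [← ENNReal.ofReal_mul (by positivity), ← ENNReal.ofReal_one]
      apply ENNReal.ofReal_le_ofReal
      rw [div_mul_eq_mul_div, le_div_iff₀ hd]
      linarith
    calc ‖ker r φ ζ‖ₑ = 1 * ‖ker r φ ζ‖ₑ := (one_mul _).symm
      _ ≤ _ := by
        simp only [Pi.mul_apply]
        rw [← mul_assoc]
        gcongr
  have hsub : D ∩ B ⊆ carlesonBox ψ (4 / 3 * (1 - r)) := by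
    intro ζ hζ
    have hζ1 : ‖ζ‖ < 1 := by simpa [B] using hζ.2
    obtain ⟨h1, -, -⟩ := aux_geom hr hr1 hz hζ1 hζ.1
    exact aux_box hr hr1 hζ1 h1 hψ
  have s3 := aux_holder hp (lam.restrict (D ∩ B)) hkm.enorm
  rw [Measure.restrict_apply_univ] at s3
  have s4 : ∫⁻ ζ in D ∩ B, ‖ker r φ ζ‖ₑ ^ p ∂lam ≤
      ENNReal.ofReal ((2 * p) ^ p * (7 / 3 * (1 - r)) ^ (1 / 2 : ℝ)) *
      ∫⁻ ζ in carlesonBox ψ (4 / 3 * (1 - r)),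
        (ENNReal.ofReal ‖z - ζ‖) ^ (-(1 / 2) : ℝ) ∂lam := by
    rw [← lintegral_const_mul _ (by fun_prop)]
    refine le_trans (setLIntegral_mono' hE fun ζ hζ => ?_) (lintegral_mono_set hsub)
    have hζ1 : ‖ζ‖ < 1 := by simpa [B] using hζ.2
    exact aux_log hp hr hr1 hz hζ1 hζ.1
  calc _ ≤ (ENNReal.ofReal (3 / 2 / (1 - r)) * ∫⁻ ζ in D ∩ B, ‖ker r φ ζ‖ₑ ∂lam) ^ p :=
        ENNReal.rpow_le_rpow (s1.trans s2) hp0.le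
    _ = ENNReal.ofReal ((3 / 2 / (1 - r)) ^ p) * (∫⁻ ζ in D ∩ B, ‖ker r φ ζ‖ₑ ∂lam) ^ p := by
        rw [ENNReal.mul_rpow_of_nonneg _ _ hp0.le,
          ENNReal.ofReal_rpow_of_nonneg (by positivity) hp0.le]
    _ ≤ ENNReal.ofReal ((3 / 2 / (1 - r)) ^ p) * (lam (carlesonBox ψ (4 / 3 * (1 - r))) ^ (p - 1) *
        (ENNReal.ofReal ((2 * p) ^ p * (7 / 3 * (1 - r)) ^ (1 / 2 : ℝ)) *
      ∫⁻ ζ in carlesonBox ψ (4 / 3 * (1 - r)),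
        (ENNReal.ofReal ‖z - ζ‖) ^ (-(1 / 2) : ℝ) ∂lam)) := by
        gcongr
        refine s3.trans ?_
        gcongr
    _ = _ := by
        rw [ENNReal.ofReal_mul (p := (3 / 2 / (1 - r)) ^ p) (by positivity)]
        ring

/-- the constant -/
noncomputable def bigK (p : ℝ) : ℝ :=
  (3 / 2) ^ p * (2 * p) ^ p * (7 / 3) ^ (1 / 2 : ℝ) * (2 * Real.pi) ^ (1 / 2 : ℝ) * 4 *
    (Real.pi / 2) ^ (1 / 2 : ℝ)

lemma bigK_pos {p : ℝ} (hp : 1 < p) : 0 < bigK p := by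
  have := Real.pi_pos
  unfold bigK
  positivity

lemma aux_key {p : ℝ} (hp : 1 < p) {r : ℝ} (hr : 1 / 2 < r) (hr1 : r < 1) (μ lam : Measure ℂ)
    [IsFiniteMeasure lam]
    (hl : ∀ M : Set ℂ, MeasurableSet M → M ⊆ Metric.ball (0 : ℂ) 1 →
        lam M = ∫⁻ ζ in M, ENNReal.ofReal (1 - ‖ζ‖) ∂μ) {a b ψ : ℝ}
    (hab : a ≤ b) (hba : b - a ≤ Real.pi * (1 - r) / 2) (hψ : ψ ∈ Set.Ioc a b) :
    ∫⁻ φ in Set.Ioc a b,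
      ‖∫ ζ in pseudoDisc ((r : ℂ) * Complex.exp (φ * Complex.I)) (1 / 7), ker r φ ζ ∂μ‖ₑ ^ p ≤
      ENNReal.ofReal (bigK p * (1 - r) ^ (1 - p)) *
        lam (carlesonBox ψ (4 / 3 * (1 - r))) ^ p := by
  have hd : 0 < 1 - r := by linarith
  have hpi := Real.pi_pos
  have hp0 : 0 < p := by linarith
  set S := carlesonBox ψ (4 / 3 * (1 - r)) with hS
  set c1 := (3 / 2 / (1 - r)) ^ p * ((2 * p) ^ p * (7 / 3 * (1 - r)) ^ (1 / 2 : ℝ)) with hc1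
  have hc1' : 0 ≤ c1 := by positivity
  set c2 := (2 * Real.pi) ^ (1 / 2 : ℝ) * (4 * (Real.pi * (1 - r) / 2) ^ (1 / 2 : ℝ)) with hc2
  have hjm : Measurable fun x : ℝ × ℂ =>
      (ENNReal.ofReal ‖(r : ℂ) * Complex.exp ((x.1 : ℝ) * Complex.I) - x.2‖) ^ (-(1 / 2) : ℝ) := by
    fun_prop
  have hc : c1 * c2 = bigK p * (1 - r) ^ (1 - p) := by
    have e1 : (1 - r) ^ (1 - p) =
        (1 - r) ^ (1 / 2 : ℝ) * (1 - r) ^ (1 / 2 : ℝ) * ((1 - r) ^ p)⁻¹ := by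
      rw [← Real.rpow_neg hd.le, ← Real.rpow_add hd, ← Real.rpow_add hd]
      congr 1; ring
    rw [hc1, hc2, bigK, e1, Real.div_rpow (by norm_num) hd.le,
      Real.mul_rpow (by norm_num : (0 : ℝ) ≤ 7 / 3) hd.le,
      show Real.pi * (1 - r) / 2 = Real.pi / 2 * (1 - r) by ring,
      Real.mul_rpow (by positivity : 0 ≤ Real.pi / 2) hd.le]
    ring
  calc _ ≤ ∫⁻ φ in Set.Ioc a b, ENNReal.ofReal c1 * (lam S ^ (p - 1) * ∫⁻ ζ in S,
        (ENNReal.ofReal ‖(r : ℂ) * Complex.exp ((φ : ℝ) * Complex.I) - ζ‖) ^ (-(1 / 2) : ℝ)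
          ∂lam) := by
        refine setLIntegral_mono' measurableSet_Ioc fun φ hφ => ?_
        refine aux_u hp hr hr1 μ lam hl ?_
        rw [abs_le]; constructor <;> linarith [hφ.1, hφ.2, hψ.1, hψ.2]
    _ = ENNReal.ofReal c1 * (lam S ^ (p - 1) * ∫⁻ φ in Set.Ioc a b, ∫⁻ ζ in S,
        (ENNReal.ofReal ‖(r : ℂ) * Complex.exp ((φ : ℝ) * Complex.I) - ζ‖) ^ (-(1 / 2) : ℝ)
          ∂lam) := by
        have hm : Measurable fun φ : ℝ => ∫⁻ ζ in S,
          (ENNReal.ofReal ‖(r : ℂ) * Complex.exp ((φ : ℝ) * Complex.I) - ζ‖) ^ (-(1 / 2) : ℝ)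
          ∂lam := Measurable.lintegral_prod_right' hjm
        rw [lintegral_const_mul _ (by fun_prop), lintegral_const_mul _ hm]
    _ = ENNReal.ofReal c1 * (lam S ^ (p - 1) * ∫⁻ ζ in S, ∫⁻ φ in Set.Ioc a b,
        (ENNReal.ofReal ‖(r : ℂ) * Complex.exp ((φ : ℝ) * Complex.I) - ζ‖) ^ (-(1 / 2) : ℝ)
          ∂volume ∂lam) := by
        rw [lintegral_lintegral_swap hjm.aemeasurable]
    _ ≤ ENNReal.ofReal c1 * (lam S ^ (p - 1) * ∫⁻ ζ in S, ENNReal.ofReal c2 ∂lam) := by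
        gcongr with ζ
        refine (aux_int hr hab (by nlinarith) ζ).trans ?_
        apply ENNReal.ofReal_le_ofReal
        rw [hc2]
        have : 0 ≤ b - a := by linarith
        gcongr
    _ = ENNReal.ofReal (c1 * c2) * (lam S ^ (p - 1) * lam S ^ (1 : ℝ)) := by
        rw [setLIntegral_const, ENNReal.ofReal_mul hc1', ENNReal.rpow_one]
        ring
    _ = _ := by
        rw [hc, ← ENNReal.rpow_add_of_nonneg _ _ (by linarith) (by norm_num), sub_add_cancel]

lemma aux_total {p : ℝ} (hp : 1 < p) {r : ℝ} (hr : 1 / 2 < r) (hr1 : r < 1) (μ lam : Measure ℂ)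
    [IsFiniteMeasure lam]
    (hl : ∀ M : Set ℂ, MeasurableSet M → M ⊆ Metric.ball (0 : ℂ) 1 →
        lam M = ∫⁻ ζ in M, ENNReal.ofReal (1 - ‖ζ‖) ∂μ) :
    ∫⁻ φ in Set.Ioc 0 (2 * Real.pi),
      ‖∫ ζ in pseudoDisc ((r : ℂ) * Complex.exp (φ * Complex.I)) (1 / 7), ker r φ ζ ∂μ‖ₑ ^ p ≤
      ENNReal.ofReal (bigK p * 5 / (2 * Real.pi) * (1 - r) ^ (-p)) *
        ∫⁻ ψ in Set.Ioc 0 (2 * Real.pi), lam (carlesonBox ψ (4 / 3 * (1 - r))) ^ p := by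
  have hd : 0 < 1 - r := by linarith
  have hpi := Real.pi_pos
  have hK := bigK_pos hp
  have hLm : Measurable fun ψ => lam (carlesonBox ψ (4 / 3 * (1 - r))) :=
    box_meas2 (by linarith) (by positivity) lam
  set N := ⌈4 / (1 - r)⌉₊ with hN
  have hN1 : 4 / (1 - r) ≤ N := Nat.le_ceil _
  have hN2 : (N : ℝ) ≤ 5 / (1 - r) := by
    have := (Nat.ceil_lt_add_one (a := 4 / (1 - r)) (by positivity)).le
    refine this.trans ?_
    rw [div_add_one hd.ne']
    gcongr
    linarith
  have hNpos : (0 : ℝ) < N := lt_of_lt_of_le (by positivity) hN1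
  set ℓ := 2 * Real.pi / N with hℓ
  have hℓ0 : 0 < ℓ := by positivity
  have hℓ1 : ℓ ≤ Real.pi * (1 - r) / 2 := by
    rw [hℓ, div_le_iff₀ hNpos]
    rw [div_le_iff₀ hd] at hN1
    nlinarith
  have hℓinv : bigK p * (1 - r) ^ (1 - p) * ℓ⁻¹ ≤ bigK p * 5 / (2 * Real.pi) * (1 - r) ^ (-p) := by
    have e : (1 - r) ^ (1 - p) = (1 - r) * (1 - r) ^ (-p) := by
      conv_rhs => rw [← Real.rpow_one (1 - r)]
      rw [Real.rpow_one, ← Real.rpow_one_add' hd.le (by linarith)]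
      congr 1
    have hq : 0 < (1 - r) ^ (-p) := by positivity
    rw [e, hℓ, inv_div]
    rw [le_div_iff₀ hd] at hN2
    have : bigK p * ((1 - r) * (1 - r) ^ (-p)) * (N / (2 * Real.pi)) =
      bigK p * (N * (1 - r)) / (2 * Real.pi) * (1 - r) ^ (-p) := by ring
    rw [this]
    gcongr
  have hstep : ∀ a : ℝ, ∫⁻ φ in Set.Ioc a (a + ℓ),
      ‖∫ ζ in pseudoDisc ((r : ℂ) * Complex.exp (φ * Complex.I)) (1 / 7), ker r φ ζ ∂μ‖ₑ ^ p ≤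
      ENNReal.ofReal (bigK p * 5 / (2 * Real.pi) * (1 - r) ^ (-p)) *
        ∫⁻ ψ in Set.Ioc a (a + ℓ), lam (carlesonBox ψ (4 / 3 * (1 - r))) ^ p := by
    intro a
    set X := ∫⁻ φ in Set.Ioc a (a + ℓ),
      ‖∫ ζ in pseudoDisc ((r : ℂ) * Complex.exp (φ * Complex.I)) (1 / 7), ker r φ ζ ∂μ‖ₑ ^ p
    have h1 : ∫⁻ ψ in Set.Ioc a (a + ℓ), X ≤ ∫⁻ ψ in Set.Ioc a (a + ℓ),
        ENNReal.ofReal (bigK p * (1 - r) ^ (1 - p)) *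
        lam (carlesonBox ψ (4 / 3 * (1 - r))) ^ p :=
      setLIntegral_mono' measurableSet_Ioc fun ψ hψ =>
        aux_key hp hr hr1 μ lam hl (by linarith) (by linarith) hψ
    rw [setLIntegral_const, Real.volume_Ioc, add_sub_cancel_left,
      lintegral_const_mul _ (hLm.pow_const p)] at h1
    calc X = X * ENNReal.ofReal ℓ * ENNReal.ofReal ℓ⁻¹ := by
          rw [mul_assoc, ← ENNReal.ofReal_mul hℓ0.le, mul_inv_cancel₀ hℓ0.ne', ENNReal.ofReal_one,
            mul_one]
      _ ≤ (ENNReal.ofReal (bigK p * (1 - r) ^ (1 - p)) *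
        ∫⁻ ψ in Set.Ioc a (a + ℓ), lam (carlesonBox ψ (4 / 3 * (1 - r))) ^ p)
          * ENNReal.ofReal ℓ⁻¹ := by gcongr
      _ = ENNReal.ofReal (bigK p * (1 - r) ^ (1 - p) * ℓ⁻¹) *
        ∫⁻ ψ in Set.Ioc a (a + ℓ), lam (carlesonBox ψ (4 / 3 * (1 - r))) ^ p := by
          rw [ENNReal.ofReal_mul (q := ℓ⁻¹) (by positivity), mul_right_comm]
      _ ≤ _ := by gcongr
  have hind : ∀ n : ℕ, ∫⁻ φ in Set.Ioc 0 (n * ℓ),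
      ‖∫ ζ in pseudoDisc ((r : ℂ) * Complex.exp (φ * Complex.I)) (1 / 7), ker r φ ζ ∂μ‖ₑ ^ p ≤
      ENNReal.ofReal (bigK p * 5 / (2 * Real.pi) * (1 - r) ^ (-p)) *
        ∫⁻ ψ in Set.Ioc 0 (n * ℓ), lam (carlesonBox ψ (4 / 3 * (1 - r))) ^ p := by
    intro n
    induction n with
    | zero => simp
    | succ n ih =>
      have e : ((n + 1 : ℕ) : ℝ) * ℓ = n * ℓ + ℓ := by push_cast; ring
      have hdis : Disjoint (Set.Ioc 0 (n * ℓ)) (Set.Ioc (n * ℓ) (n * ℓ + ℓ)) :=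
        Set.Ioc_disjoint_Ioc_of_le le_rfl
      rw [e, ← Set.Ioc_union_Ioc_eq_Ioc (b := n * ℓ) (by positivity) (by linarith),
        lintegral_union measurableSet_Ioc hdis, lintegral_union measurableSet_Ioc hdis, mul_add]
      exact add_le_add ih (hstep _)
  have := hind N
  rwa [hℓ, mul_div_cancel₀ _ hNpos.ne'] at this

/-- For `p ∈ (1,∞)`, `γ ∈ (0,1]` there is `C = C(p,γ) > 0` such that
for every finite positive Borel measure `λ` on the closed disc with
`dλ = (1-|ζ|)dμ` on `𝔻` and `(∫₀^{2π} λ(C(φ,δ))^p dφ)^{1/p} ≤ M·δ^γ` for all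
`δ ∈ (0,1)`, the function
`u₁(re^{iφ}) = ∫_{D*(re^{iφ},1/7)} log|(1-re^{iφ}·conj ζ)/(re^{iφ}-ζ)| dμ(ζ)`
satisfies `(∫₀^{2π} |u₁(re^{iφ})|^p dφ)^{1/p} ≤ C·M·(1-r)^{γ-1}` for `r ∈ (1/2,1)`. -/
theorem stmt19 (p γ : ℝ) (hp : 1 < p) (hγ : 0 < γ) (hγ1 : γ ≤ 1) :
    ∃ C : ℝ, 0 < C ∧ ∀ (μ lam : Measure ℂ), IsFiniteMeasure lam →
      lam (Metric.closedBall (0 : ℂ) 1)ᶜ = 0 →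
      (∀ M : Set ℂ, MeasurableSet M → M ⊆ Metric.ball (0 : ℂ) 1 →
        lam M = ∫⁻ ζ in M, ENNReal.ofReal (1 - ‖ζ‖) ∂μ) →
      ∀ M : ℝ, 0 < M →
      (∀ δ ∈ Set.Ioo (0 : ℝ) 1,
        (∫ φ in (0 : ℝ)..(2 * Real.pi), (lam (carlesonBox φ δ)).toReal ^ p) ^ (1 / p) ≤
          M * δ ^ γ) →
      ∀ r ∈ Set.Ioo (1 / 2 : ℝ) 1,
        (∫ φ in (0 : ℝ)..(2 * Real.pi),
            |∫ ζ in pseudoDisc ((r : ℂ) * Complex.exp (φ * Complex.I)) (1 / 7),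
              Real.log (‖
                (1 - (r : ℂ) * Complex.exp (φ * Complex.I) * (starRingEnd ℂ) ζ) /
                  ((r : ℂ) * Complex.exp (φ * Complex.I) - ζ)‖) ∂μ| ^ p) ^ (1 / p) ≤
          C * M * (1 - r) ^ (γ - 1) := by
  have hp0 : 0 < p := by linarith
  have hpi := Real.pi_pos
  have hK := bigK_pos hp
  refine ⟨(bigK p * 5 / (2 * Real.pi)) ^ (1 / p) * (4 / 3), by positivity, ?_⟩
  intro μ lam hfin _ hl M hM hH r hr
  obtain ⟨hr0, hr1⟩ := hr
  have hd : 0 < 1 - r := by linarith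
  have hδ : 4 / 3 * (1 - r) ∈ Set.Ioo (0 : ℝ) 1 := ⟨by positivity, by linarith⟩
  have h1 := aux_total hp hr0 hr1 μ lam hl
  have h2 := hH _ hδ
  set L : ℝ → ENNReal := fun ψ => lam (carlesonBox ψ (4 / 3 * (1 - r))) with hL
  have hLm : Measurable L := box_meas2 hδ.2 hδ.1 lam
  have hX : ∫⁻ ψ in Set.Ioc 0 (2 * Real.pi), L ψ ^ p =
      ENNReal.ofReal (∫ ψ in (0 : ℝ)..(2 * Real.pi), (L ψ).toReal ^ p) := by
    rw [intervalIntegral.integral_of_le (by positivity), ofReal_integral_eq_lintegral_ofReal]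
    · refine lintegral_congr fun ψ => ?_
      rw [← ENNReal.ofReal_rpow_of_nonneg ENNReal.toReal_nonneg hp0.le,
        ENNReal.ofReal_toReal (measure_ne_top _ _)]
    · refine Measure.integrableOn_of_bounded (M := (lam Set.univ).toReal ^ p) measure_Ioc_lt_top.ne
        (hLm.ennreal_toReal.pow_const p).aestronglyMeasurable ?_
      refine Filter.Eventually.of_forall fun ψ => ?_
      rw [Real.norm_of_nonneg (by positivity)]
      gcongr
      · exact measure_ne_top _ _
      · exact measure_mono (Set.subset_univ _)
    · exact Filter.Eventually.of_forall fun ψ => by positivity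
  set J := ∫ ψ in (0 : ℝ)..(2 * Real.pi), (L ψ).toReal ^ p with hJ
  have hJ0 : 0 ≤ J := intervalIntegral.integral_nonneg (by positivity) fun ψ _ => by positivity
  rw [hX, ← ENNReal.ofReal_mul (by positivity)] at h1
  have h3 : (∫ φ in (0 : ℝ)..(2 * Real.pi),
      |∫ ζ in pseudoDisc ((r : ℂ) * Complex.exp (φ * Complex.I)) (1 / 7), ker r φ ζ ∂μ| ^ p) ≤
      bigK p * 5 / (2 * Real.pi) * (1 - r) ^ (-p) * J := by
    rw [intervalIntegral.integral_of_le (by positivity)]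
    rw [← ENNReal.ofReal_le_ofReal_iff (by positivity)]
    refine le_trans ?_ h1
    refine (Real.ofReal_le_enorm _).trans ((enorm_integral_le_lintegral_enorm _).trans_eq ?_)
    refine lintegral_congr fun φ => ?_
    rw [Real.enorm_of_nonneg (by positivity), ← Real.enorm_abs,
      Real.enorm_of_nonneg (abs_nonneg _), ENNReal.ofReal_rpow_of_nonneg (abs_nonneg _) hp0.le]
  have h0 : 0 ≤ (∫ φ in (0 : ℝ)..(2 * Real.pi),
      |∫ ζ in pseudoDisc ((r : ℂ) * Complex.exp (φ * Complex.I)) (1 / 7), ker r φ ζ ∂μ| ^ p) :=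
    intervalIntegral.integral_nonneg (by positivity) fun ψ _ => by positivity
  have h4 := Real.rpow_le_rpow h0 h3 (by positivity : 0 ≤ 1 / p)
  refine h4.trans ?_
  rw [Real.mul_rpow (by positivity) hJ0, Real.mul_rpow (by positivity) (by positivity),
    ← Real.rpow_mul hd.le]
  have e1 : -p * (1 / p) = -1 := by field_simp
  have e2 : (1 - r) ^ (γ - 1) = (1 - r) ^ (-1 : ℝ) * (1 - r) ^ γ := by
    rw [← Real.rpow_add hd]; congr 1; ring
  rw [e1, e2]
  have e3 : (4 / 3 * (1 - r)) ^ γ ≤ 4 / 3 * (1 - r) ^ γ := by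
    rw [Real.mul_rpow (by norm_num) hd.le]
    gcongr
    calc (4 / 3 : ℝ) ^ γ ≤ (4 / 3) ^ (1 : ℝ) :=
          Real.rpow_le_rpow_of_exponent_le (by norm_num) hγ1
      _ = 4 / 3 := Real.rpow_one _
  calc _ ≤ (bigK p * 5 / (2 * Real.pi)) ^ (1 / p) * (1 - r) ^ (-1 : ℝ) *
        (M * (4 / 3 * (1 - r) ^ γ)) := by
        gcongr
        refine h2.trans ?_
        gcongr
    _ = _ := by ring
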